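/- Let G ⊆ UT(n,ℝ) be a real unipotent group and H ⊆ G a real algebraic subgroup. If g₁, g₂ ∈ G are such that μ(G)·g₁·H^♯ ∩ μ(G)·g₂·H^♯ ≠ ∅, then g₁H = g₂H. -/

import Mathlib

open Pointwise Filter

noncomputable section

/-- Square matrices of size `n` over `R`. -/
abbrev Mat (n : ℕ) (R : Type) : Type := Matrix (Fin n) (Fin n) R

/-- The set `UT(n,ℝ)` of upper triangular matrices with `1`s on the diagonal. -/
def UTset (n : ℕ) : Set (Mat n ℝ) :=
  {A | (∀ i, A i i = 1) ∧ ∀ i j : Fin n, (j : ℕ) < (i : ℕ) → A i j = 0}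

/-- The entries of a matrix, as a point of `ℝ^(n²)`. -/
def matEval {n : ℕ} (A : Mat n ℝ) : Fin n × Fin n → ℝ := fun ij => A ij.1 ij.2

/-- A real unipotent group: a subgroup of `UT(n,ℝ)` which is the common zero set in
`UT(n,ℝ)` of a family of real polynomials in the matrix entries. -/
def IsRealUnipotentGroup (n : ℕ) (G : Set (Mat n ℝ)) : Prop :=
  (∃ S : Set (MvPolynomial (Fin n × Fin n) ℝ),
      G = {A | A ∈ UTset n ∧ ∀ p ∈ S, MvPolynomial.eval (matEval A) p = 0}) ∧
    (1 : Mat n ℝ) ∈ G ∧ (∀ a ∈ G, ∀ b ∈ G, a * b ∈ G) ∧ ∀ a ∈ G, a⁻¹ ∈ G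

/-- A real algebraic subgroup of a real unipotent group `G`. -/
def IsRealAlgSubgroup (n : ℕ) (G H : Set (Mat n ℝ)) : Prop :=
  H ⊆ G ∧ IsRealUnipotentGroup n H

/-- `N` is a normal subgroup-set of `G`. -/
def IsNormalIn (n : ℕ) (G N : Set (Mat n ℝ)) : Prop :=
  ∀ g ∈ G, ∀ x ∈ N, g * x * g⁻¹ ∈ N

/-- `Γ` is a lattice in `G`: a discrete subgroup which is cocompact, i.e. there is a
compact `K ⊆ G` with `K·Γ = G` (equivalently, `G/Γ` is compact). -/
def IsLatticeIn (n : ℕ) (G Γ : Set (Mat n ℝ)) : Prop :=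
  Γ ⊆ G ∧ (1 : Mat n ℝ) ∈ Γ ∧ (∀ a ∈ Γ, ∀ b ∈ Γ, a * b ∈ Γ) ∧ (∀ a ∈ Γ, a⁻¹ ∈ Γ) ∧
    DiscreteTopology ↥Γ ∧
    ∃ K : Set (Mat n ℝ), K ⊆ G ∧ IsCompact K ∧ ∀ g ∈ G, ∃ k ∈ K, ∃ γ ∈ Γ, g = k * γ

/-- `H` is `Γ`-rational: `Γ ∩ H` is a lattice in `H`. -/
def IsRationalFor (n : ℕ) (Γ H : Set (Mat n ℝ)) : Prop :=
  IsLatticeIn n H (Γ ∩ H)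

/-- The hyperreal matrix represented by a sequence of real matrices. -/
def matOfSeq (n : ℕ) (u : ℕ → Mat n ℝ) : Mat n Hyperreal :=
  Matrix.of fun i j => Hyperreal.ofSeq fun k => u k i j

/-- The nonstandard extension `S^♯` of a set `S` of real matrices: hyperreal matrices
represented by sequences landing in `S` on a set of indices in the ultrafilter. -/
def matSharp (n : ℕ) (S : Set (Mat n ℝ)) : Set (Mat n Hyperreal) :=
  {A | ∃ u : ℕ → Mat n ℝ, (∀ᶠ k in hyperfilter ℕ, u k ∈ S) ∧ A = matOfSeq n u}

/-- The canonical embedding of real matrices into hyperreal matrices. -/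
def matCast {n : ℕ} (A : Mat n ℝ) : Mat n Hyperreal :=
  Matrix.of fun i j => (A i j : Hyperreal)

/-- `μ(G)`: elements of `G^♯` all of whose entries are infinitesimally close to the
corresponding entries of the identity matrix. -/
def muSet (n : ℕ) (G : Set (Mat n ℝ)) : Set (Mat n Hyperreal) :=
  {A | A ∈ matSharp n G ∧ ∀ i j, Hyperreal.Infinitesimal (A i j - (1 : Mat n Hyperreal) i j)}

/-- The coset `gH` is near `α`, i.e. `α ∈ μ(G)·g·H^♯`. -/
def NearCoset (n : ℕ) (G : Set (Mat n ℝ)) (g : Mat n ℝ) (H : Set (Mat n ℝ))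
    (α : Mat n Hyperreal) : Prop :=
  α ∈ muSet n G * ({matCast g} * matSharp n H)

/-- The set of standard parts of the finite elements of a set of hyperreal matrices. -/
def matStSet (n : ℕ) (A : Set (Mat n Hyperreal)) : Set (Mat n ℝ) :=
  {B | ∃ a ∈ A, ∀ i j, Hyperreal.IsSt (a i j) (B i j)}

/-- A polynomial map `ℝ^d → Mat n ℝ`. -/
def IsPolyMapVec (d n : ℕ) (F : (Fin d → ℝ) → Mat n ℝ) : Prop :=
  ∃ P : Fin n → Fin n → MvPolynomial (Fin d) ℝ,
    ∀ x i j, F x i j = MvPolynomial.eval x (P i j)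

/-- The inclusion `ℝ →+* ℝ*` as a ring homomorphism. -/
def realHyperRingHom : ℝ →+* Hyperreal where
  toFun r := (r : Hyperreal)
  map_one' := Hyperreal.coe_one
  map_mul' := Hyperreal.coe_mul
  map_zero' := Hyperreal.coe_zero
  map_add' := Hyperreal.coe_add

/-- A semialgebraic subset of matrix space: a finite union of sets defined by finitely
many polynomial equations and finitely many strict polynomial inequalities. -/
def IsSemialgebraic (n : ℕ) (S : Set (Mat n ℝ)) : Prop :=
  ∃ (k : ℕ) (P Q : Fin k → Finset (MvPolynomial (Fin n × Fin n) ℝ)),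
    S = ⋃ t : Fin k, {A | (∀ p ∈ P t, MvPolynomial.eval (matEval A) p = 0) ∧
      ∀ q ∈ Q t, 0 < MvPolynomial.eval (matEval A) q}


/-- Taking the class of a sequence, as a ring homomorphism. -/
def ofSeqHom : (ℕ → ℝ) →+* Hyperreal where
  toFun f := Hyperreal.ofSeq f
  map_one' := rfl
  map_mul' _ _ := rfl
  map_zero' := rfl
  map_add' _ _ := rfl

theorem matOfSeq_mul (n : ℕ) (u v : ℕ → Mat n ℝ) :
    matOfSeq n u * matOfSeq n v = matOfSeq n (fun k => u k * v k) := by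
  ext i j
  have h : (fun k => (u k * v k) i j) = ∑ l, (fun k => u k i l) * (fun k => v k l j) := by
    funext k
    simp [Matrix.mul_apply, Finset.sum_apply]
  change ∑ l, ofSeqHom (fun k => u k i l) * ofSeqHom (fun k => v k l j)
    = ofSeqHom (fun k => (u k * v k) i j)
  rw [h, map_sum]
  simp only [map_mul]

theorem matCast_eq (n : ℕ) (A : Mat n ℝ) : matCast A = matOfSeq n (fun _ => A) := rfl

theorem matOfSeq_eq {n : ℕ} {u v : ℕ → Mat n ℝ} (h : matOfSeq n u = matOfSeq n v) :
    ∀ᶠ k in hyperfilter ℕ, u k = v k := by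
  have h1 : ∀ i j, ∀ᶠ k in hyperfilter ℕ, u k i j = v k i j := fun i j =>
    Filter.Germ.coe_eq.1 (congrFun (congrFun h i) j)
  have h2 : ∀ᶠ k in hyperfilter ℕ, ∀ i j, u k i j = v k i j :=
    Filter.eventually_all.2 fun i => Filter.eventually_all.2 fun j => h1 i j
  filter_upwards [h2] with k hk
  ext i j
  exact hk i j

set_option linter.deprecated false in
theorem mu_tendsto {n : ℕ} {u : ℕ → Mat n ℝ}
    (h : ∀ i j, Hyperreal.Infinitesimal (matOfSeq n u i j - (1 : Mat n Hyperreal) i j)) :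
    Tendsto u (hyperfilter ℕ) (nhds 1) := by
  refine tendsto_pi_nhds.2 fun i => tendsto_pi_nhds.2 fun j => ?_
  have e : (1 : Mat n Hyperreal) i j = (((1 : Mat n ℝ) i j : ℝ) : Hyperreal) := by
    by_cases hij : i = j
    · subst hij; simp
    · simp [Matrix.one_apply_ne hij]
  have h1 := h i j
  rw [e] at h1
  have h2 := Hyperreal.IsSt.add h1 (Hyperreal.isSt_refl_real ((1 : Mat n ℝ) i j))
  rw [sub_add_cancel, zero_add] at h2
  exact Hyperreal.isSt_ofSeq_iff_tendsto.1 h2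

theorem UT_det {n : ℕ} {A : Mat n ℝ} (h : A ∈ UTset n) : A.det = 1 := by
  have : A.BlockTriangular id := fun i j hij => h.2 i j hij
  rw [Matrix.det_of_upperTriangular this]
  simp [h.1]

theorem group_sub_UT {n : ℕ} {G : Set (Mat n ℝ)} (h : IsRealUnipotentGroup n G) :
    G ⊆ UTset n := by
  obtain ⟨⟨S, rfl⟩, -⟩ := h
  exact fun A hA => hA.1

theorem group_closed {n : ℕ} {G : Set (Mat n ℝ)} (h : IsRealUnipotentGroup n G) :
    IsClosed G := by
  obtain ⟨⟨S, rfl⟩, -⟩ := h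
  have hc : ∀ i j, Continuous fun A : Mat n ℝ => A i j := fun i j =>
    (continuous_apply j).comp (continuous_apply i)
  have hm : Continuous (matEval (n := n)) := continuous_pi fun ij => hc ij.1 ij.2
  simp only [UTset, Set.mem_setOf_eq, Set.setOf_and, Set.setOf_forall]
  refine IsClosed.inter (IsClosed.inter ?_ ?_) ?_
  · exact isClosed_iInter fun i => isClosed_eq (hc i i) continuous_const
  · exact isClosed_iInter fun i => isClosed_iInter fun j => isClosed_iInter fun _ =>
      isClosed_eq (hc i j) continuous_const
  · exact isClosed_iInter fun p => isClosed_iInter fun _ =>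
      isClosed_eq ((MvPolynomial.continuous_eval p).comp hm) continuous_const

/-- distinct cosets of `H` have disjoint `μ(G)`-neighborhoods. -/
theorem stmt6 {n : ℕ} (G : Set (Mat n ℝ)) (hG : IsRealUnipotentGroup n G)
    (H : Set (Mat n ℝ)) (hH : IsRealAlgSubgroup n G H)
    (g₁ g₂ : Mat n ℝ) (hg₁ : g₁ ∈ G) (hg₂ : g₂ ∈ G)
    (hmeet : ((muSet n G * ({matCast g₁} * matSharp n H)) ∩
      (muSet n G * ({matCast g₂} * matSharp n H))).Nonempty) :
    {g₁} * H = {g₂} * H := by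
  obtain ⟨x, ⟨a, ⟨⟨u, hu, rfl⟩, hau⟩, b, ⟨c, hc, d, ⟨v, hv, rfl⟩, rfl⟩, hx⟩,
    a', ⟨⟨u', hu', rfl⟩, hau'⟩, b', ⟨c', hc', d', ⟨v', hv', rfl⟩, rfl⟩, hx'⟩ := hmeet
  rw [Set.mem_singleton_iff] at hc hc'
  subst hc hc'
  have heq := hx.trans hx'.symm
  simp only [matCast_eq, matOfSeq_mul] at heq
  have heq := matOfSeq_eq heq
  have hlim := mu_tendsto hau
  have hlim' := mu_tendsto hau'
  obtain ⟨hHG, hHU⟩ := hH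
  have hcl := group_closed hHU
  obtain ⟨-, -, hHm, hHi⟩ := hHU
  have hdet : ∀ A ∈ G, IsUnit A.det := fun A hA => by
    rw [UT_det (group_sub_UT hG hA)]; exact isUnit_one
  have hadj : ∀ A ∈ G, A.adjugate = A⁻¹ := fun A hA => by
    rw [Matrix.inv_def, UT_det (group_sub_UT hG hA)]; simp
  have hT : Tendsto (fun k => g₂⁻¹ * ((u' k).adjugate * (u k * g₁))) (hyperfilter ℕ)
      (nhds (g₂⁻¹ * ((1 : Mat n ℝ).adjugate * (1 * g₁)))) := by
    have ha : Tendsto (fun k => (u' k).adjugate) (hyperfilter ℕ)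
        (nhds (1 : Mat n ℝ).adjugate) :=
      ((continuous_id.matrix_adjugate).tendsto (1 : Mat n ℝ)).comp hlim'
    exact tendsto_const_nhds.mul (ha.mul (hlim.mul tendsto_const_nhds))
  rw [Matrix.adjugate_one, one_mul, one_mul] at hT
  have key : g₂⁻¹ * g₁ ∈ H := by
    refine hcl.mem_of_tendsto hT ?_
    filter_upwards [heq, hu, hu', hv, hv'] with k hk h1 h2 h3 h4
    have e : u k * g₁ = u' k * (g₂ * (v' k * (v k)⁻¹)) := by
      have := congrArg (· * (v k)⁻¹) hk
      simp only [mul_assoc] at this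
      rwa [Matrix.mul_nonsing_inv _ (hdet _ (hHG h3)), mul_one] at this
    rw [hadj _ h2, e, Matrix.nonsing_inv_mul_cancel_left _ _ (hdet _ h2),
      Matrix.nonsing_inv_mul_cancel_left _ _ (hdet _ hg₂)]
    exact hHm _ h4 _ (hHi _ h3)
  have key' : g₁⁻¹ * g₂ ∈ H := by
    have := hHi _ key
    rwa [Matrix.mul_inv_rev, Matrix.nonsing_inv_nonsing_inv _ (hdet _ hg₂)] at this
  ext y
  simp only [Set.singleton_mul, Set.mem_image]
  constructor
  · rintro ⟨h, hh, rfl⟩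
    refine ⟨g₂⁻¹ * g₁ * h, hHm _ key _ hh, ?_⟩
    rw [mul_assoc, Matrix.mul_nonsing_inv_cancel_left _ _ (hdet _ hg₂)]
  · rintro ⟨h, hh, rfl⟩
    refine ⟨g₁⁻¹ * g₂ * h, hHm _ key' _ hh, ?_⟩
    rw [mul_assoc, Matrix.mul_nonsing_inv_cancel_left _ _ (hdet _ hg₁)]
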